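/- Let (X_n) be a random walk in periodic environment on Z^d. Suppose the induced Markov chain ξ_n on the torus T is irreducible and aperiodic, and that Σ_{y∈Z^d} |y| p_x(y) < ∞ for every x ∈ T. Then X_n / n converges almost surely, as n → ∞, to the vector ν := Σ_{x∈T} π(x) Σ_{y∈Z^d} p_x(y) y. -/

import Mathlib

open MeasureTheory Filter Topology ProbabilityTheory

noncomputable section

/-- The torus `T = ℤ^d / (M₁ℤ × ⋯ × M_dℤ)`. -/
abbrev Torus (d : ℕ) (Md : Fin d → ℕ) : Type := ∀ i : Fin d, ZMod (Md i)

/-- Projection of `ℤ^d` onto the torus, `x ↦ x mod M`. -/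
def projT {d : ℕ} (Md : Fin d → ℕ) (x : Fin d → ℤ) : Torus d Md :=
  fun i => (x i : ZMod (Md i))

/-- A canonical representative in `ℤ^d` of a point of the torus. -/
def repT {d : ℕ} (Md : Fin d → ℕ) [∀ i, NeZero (Md i)] (t : Torus d Md) : Fin d → ℤ :=
  fun i => ((t i).val : ℤ)

/-- `p` is a periodic environment on `ℤ^d`: each `p x` is a probability distribution
on `ℤ^d` (the jump distribution at `x`), and `x ↦ p x` is `M`-periodic. -/
def IsPeriodicEnv {d : ℕ} (Md : Fin d → ℕ) (p : (Fin d → ℤ) → (Fin d → ℤ) → ℝ) : Prop :=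
  (∀ x y, 0 ≤ p x y) ∧ (∀ x, HasSum (p x) 1) ∧
    ∀ (x y : Fin d → ℤ) (i : Fin d), p (x + Pi.single i (Md i : ℤ)) y = p x y

/-- The transition matrix of the induced Markov chain on the torus:
`P a b = ∑_{z : ℤ^d, a + z ∼ b} p_a(z)` (the jump `z` leads from the class `a`
to the class `b` iff `a + (z mod M) = b`). -/
def indMatrix {d : ℕ} (Md : Fin d → ℕ) [∀ i, NeZero (Md i)]
    (p : (Fin d → ℤ) → (Fin d → ℤ) → ℝ) : Matrix (Torus d Md) (Torus d Md) ℝ :=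
  Matrix.of fun a b => ∑' z : Fin d → ℤ, if a + projT Md z = b then p (repT Md a) z else 0

/-- Irreducibility of a finite-state transition matrix: every state can be reached
from every state with positive probability in finitely many (positively many) steps. -/
def MatIrreducible {T : Type*} [Fintype T] [DecidableEq T] (P : Matrix T T ℝ) : Prop :=
  ∀ a b : T, ∃ n : ℕ, 0 < n ∧ 0 < (P ^ n) a b

/-- Aperiodicity of a finite-state transition matrix: for every state, the gcd of
the possible return times is `1`. -/
def MatAperiodic {T : Type*} [Fintype T] [DecidableEq T] (P : Matrix T T ℝ) : Prop :=
  ∀ a : T, ∀ m : ℕ, (∀ n : ℕ, 0 < n → 0 < (P ^ n) a a → m ∣ n) → m = 1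

/-- `π` is a stationary probability distribution for the transition matrix `P`. -/
def IsStationaryDist {T : Type*} [Fintype T] (P : Matrix T T ℝ) (π : T → ℝ) : Prop :=
  (∀ a, 0 ≤ π a) ∧ (∑ a, π a = 1) ∧ ∀ b, ∑ a, π a * P a b = π b

/-- The drift vector `ν = ∑_{x ∈ T} π(x) ∑_{y ∈ ℤ^d} p_x(y) y`. -/
def driftVec {d : ℕ} (Md : Fin d → ℕ) [∀ i, NeZero (Md i)]
    (p : (Fin d → ℤ) → (Fin d → ℤ) → ℝ) (π : Torus d Md → ℝ) : Fin d → ℝ :=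
  fun i => ∑ a : Torus d Md, π a * ∑' y : Fin d → ℤ, p (repT Md a) y * (y i : ℝ)

/-- `μ` is the law of the random walk in the environment `p` started at `x₀`,
as a probability measure on trajectory space: the probability of every cylinder set
is the corresponding product of one-step transition probabilities. -/
def IsRWPELaw {d : ℕ} (p : (Fin d → ℤ) → (Fin d → ℤ) → ℝ) (x₀ : Fin d → ℤ)
    (μ : Measure (ℕ → (Fin d → ℤ))) : Prop :=
  IsProbabilityMeasure μ ∧
    ∀ (n : ℕ) (x : ℕ → (Fin d → ℤ)),
      μ {ω | ∀ i ≤ n, ω i = x i} =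
        ENNReal.ofReal ((if x 0 = x₀ then (1 : ℝ) else 0) *
          ∏ i ∈ Finset.range n, p (x i) (x (i + 1) - x i))

/-- `e` is one of the `2d` unit vectors of `ℤ^d`. -/
def IsUnitVec {d : ℕ} (e : Fin d → ℤ) : Prop :=
  ∃ i : Fin d, e = Pi.single i 1 ∨ e = -Pi.single i 1

/-- The environment is nearest neighbour: only jumps to nearest neighbours have
positive probability. -/
def IsNearestNeighbour {d : ℕ} (p : (Fin d → ℤ) → (Fin d → ℤ) → ℝ) : Prop :=
  ∀ x y, p x y ≠ 0 → IsUnitVec y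

/-- The average negative gradient `g` of the potential,
`g_i = (1/M_i) ∑_{j=0}^{M_i - 1} log (p_{j eᵢ}(eᵢ) / p_{(j+1) eᵢ}(-eᵢ))`. -/
def avgNegGrad {d : ℕ} (Md : Fin d → ℕ) (p : (Fin d → ℤ) → (Fin d → ℤ) → ℝ) :
    Fin d → ℝ :=
  fun i => (Md i : ℝ)⁻¹ * ∑ j ∈ Finset.range (Md i),
    Real.log (p (Pi.single i (j : ℤ)) (Pi.single i 1) /
      p (Pi.single i ((j : ℤ) + 1)) (-Pi.single i 1))

/-- The conditional expected jump `μ_{xy}` of the walk, given that the induced chain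
jumps from `x` to `y`. -/
def condJump {d : ℕ} (Md : Fin d → ℕ) [∀ i, NeZero (Md i)]
    (p : (Fin d → ℤ) → (Fin d → ℤ) → ℝ) (a b : Torus d Md) : Fin d → ℝ :=
  if indMatrix Md p a b = 0 then 0
  else fun i =>
    (∑' z : Fin d → ℤ, if a + projT Md z = b then p (repT Md a) z * (z i : ℝ) else 0) /
      indMatrix Md p a b

section Helpers

open Finset in
/-- Number of visits to the state `t` before time `n` along the path `x`. -/
def visits {S T : Type*} [DecidableEq T] (c : S → T) (x : ℕ → S) (t : T) (n : ℕ) : ℕ :=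
  ∑ j ∈ Finset.range n, if c (x j) = t then 1 else 0

/-- The walk driven by the stacks of jumps `U (t, ·)`, with its visit counters. -/
def stackWalk {S T : Type*} [AddCommGroup S] [DecidableEq T] (c : S → T) (U : T × ℕ → S) :
    ℕ → S × (T → ℕ)
  | 0 => (0, fun _ => 0)
  | n + 1 =>
    ((stackWalk c U n).1 + U (c (stackWalk c U n).1, (stackWalk c U n).2 (c (stackWalk c U n).1)),
      fun t => (stackWalk c U n).2 t + if c (stackWalk c U n).1 = t then 1 else 0)

lemma stackWalk_visits {S T : Type*} [AddCommGroup S] [DecidableEq T] (c : S → T) (U : T × ℕ → S)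
    (n : ℕ) (t : T) :
    (stackWalk c U n).2 t = visits c (fun k => (stackWalk c U k).1) t n := by
  induction n with
  | zero => simp [stackWalk, visits]
  | succ n ih =>
    simp only [stackWalk]
    rw [ih, visits, visits, Finset.sum_range_succ]

lemma visits_congr {S T : Type*} [DecidableEq T] (c : S → T) (x y : ℕ → S) (t : T) (n : ℕ)
    (h : ∀ i < n, x i = y i) : visits c x t n = visits c y t n := by
  unfold visits
  refine Finset.sum_congr rfl fun j hj => ?_
  rw [h j (Finset.mem_range.1 hj)]

lemma visits_le {S T : Type*} [DecidableEq T] (c : S → T) (x : ℕ → S) (t : T) (n : ℕ) :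
    visits c x t n ≤ n := by
  unfold visits
  calc _ ≤ ∑ j ∈ Finset.range n, 1 := Finset.sum_le_sum fun j _ => by split_ifs <;> simp
    _ = n := by simp

lemma visits_sum {S T : Type*} [DecidableEq T] [Fintype T] (c : S → T) (x : ℕ → S) (n : ℕ) :
    ∑ t, visits c x t n = n := by
  unfold visits
  rw [Finset.sum_comm]
  simp

lemma visits_mono {S T : Type*} [DecidableEq T] (c : S → T) (x : ℕ → S) (t : T) :
    Monotone (visits c x t) := by
  refine monotone_nat_of_le_succ fun n => ?_
  unfold visits
  rw [Finset.sum_range_succ]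
  simp

lemma visits_inj {S T : Type*} [DecidableEq T] (c : S → T) (x : ℕ → S) :
    Function.Injective (fun i => (c (x i), visits c x (c (x i)) i)) := by
  have key : ∀ i j, i < j → (c (x i), visits c x (c (x i)) i) ≠ (c (x j), visits c x (c (x j)) j) := by
    intro i j hij h
    simp only [Prod.mk.injEq] at h
    obtain ⟨h1, h2⟩ := h
    rw [← h1] at h2
    have h3 := visits_mono c x (c (x i)) (Nat.succ_le_of_lt hij)
    have h4 : visits c x (c (x i)) (i + 1) = visits c x (c (x i)) i + 1 := by
      unfold visits
      rw [Finset.sum_range_succ, if_pos rfl]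
    rw [Nat.succ_eq_add_one, h4] at h3
    omega
  intro i j h
  rcases lt_trichotomy i j with h' | h' | h'
  · exact absurd h (key i j h')
  · exact h'
  · exact absurd h.symm (key j i h')

lemma stackWalk_cyl {S T : Type*} [AddCommGroup S] [DecidableEq T] (c : S → T) (U : T × ℕ → S)
    (x : ℕ → S) (hx : x 0 = 0) (n : ℕ) :
    (∀ i ≤ n, (stackWalk c U i).1 = x i) ↔
      ∀ i < n, U (c (x i), visits c x (c (x i)) i) = x (i + 1) - x i := by
  induction n with
  | zero => simp [stackWalk, hx]
  | succ n ih =>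
    have e1 : (∀ i ≤ n + 1, (stackWalk c U i).1 = x i) ↔
        (∀ i ≤ n, (stackWalk c U i).1 = x i) ∧ (stackWalk c U (n + 1)).1 = x (n + 1) := by
      constructor
      · exact fun h => ⟨fun i hi => h i (by omega), h _ le_rfl⟩
      · rintro ⟨h1, h2⟩ i hi
        rcases Nat.lt_or_ge n i with h | h
        · obtain rfl : i = n + 1 := by omega
          exact h2
        · exact h1 i h
    rw [e1, Nat.forall_lt_succ_right, ← ih]
    refine and_congr_right fun h => ?_
    simp only [stackWalk]
    rw [stackWalk_visits, visits_congr c _ x _ n (fun i hi => h i hi.le), h n le_rfl,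
      eq_sub_iff_add_eq, add_comm]

/-- Sums along the walk, reorganised along the stacks. -/
lemma stackWalk_sum {S T : Type*} [AddCommGroup S] [DecidableEq T] [Fintype T] (c : S → T)
    (U : T × ℕ → S) (F : T → S → ℝ) (n : ℕ) :
    ∑ k ∈ Finset.range n, F (c (stackWalk c U k).1)
        ((stackWalk c U (k + 1)).1 - (stackWalk c U k).1) =
      ∑ t, ∑ j ∈ Finset.range ((stackWalk c U n).2 t), F t (U (t, j)) := by
  induction n with
  | zero => simp [stackWalk]
  | succ n ih =>
    rw [Finset.sum_range_succ, ih]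
    simp only [stackWalk, add_sub_cancel_left]
    set s := stackWalk c U n
    have : ∀ t, ∑ j ∈ Finset.range (s.2 t + if c s.1 = t then 1 else 0), F t (U (t, j)) =
        ∑ j ∈ Finset.range (s.2 t), F t (U (t, j)) +
          if c s.1 = t then F t (U (t, s.2 t)) else 0 := by
      intro t
      split_ifs
      · rw [Finset.sum_range_succ]
      · simp
    simp_rw [this, Finset.sum_add_distrib]
    simp

lemma stackWalk_measurable {S T : Type*} [AddCommGroup S] [DecidableEq T] [Fintype T]
    [MeasurableSpace S] [Countable S] [MeasurableSingletonClass S] (c : S → T) (n : ℕ) :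
    Measurable (fun U : T × ℕ → S => stackWalk c U n) := by
  induction n with
  | zero => exact measurable_const
  | succ n ih =>
    let G : (S × (T → ℕ)) × (T × ℕ → S) → S × (T → ℕ) := fun q =>
      (q.1.1 + q.2 (c q.1.1, q.1.2 (c q.1.1)), fun t => q.1.2 t + if c q.1.1 = t then 1 else 0)
    have hG : Measurable G := by
      refine measurable_from_prod_countable_right fun s => ?_
      refine Measurable.prodMk ?_ (measurable_const (a := fun t => s.2 t + if c s.1 = t then 1 else 0))
      exact (measurable_of_countable (fun u : S => s.1 + u)).comp
        (measurable_pi_apply (c s.1, s.2 (c s.1)))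
    exact hG.comp (ih.prodMk measurable_id)

/-- A measure on trajectories is determined by cylinders. -/
lemma traj_measure_ext {S : Type*} [MeasurableSpace S] [Countable S] [MeasurableSingletonClass S]
    (μ ν : Measure (ℕ → S)) [IsProbabilityMeasure μ] [IsProbabilityMeasure ν]
    (h : ∀ (n : ℕ) (x : ℕ → S), μ {ω | ∀ i ≤ n, ω i = x i} = ν {ω | ∀ i ≤ n, ω i = x i}) :
    μ = ν := by
  let C : Set (Set (ℕ → S)) := {A | ∃ (n : ℕ) (x : ℕ → S), A = {ω | ∀ i ≤ n, ω i = x i}}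
  have hmeas : ∀ (n : ℕ) (x : ℕ → S), MeasurableSet {ω : ℕ → S | ∀ i ≤ n, ω i = x i} := by
    intro n x
    have : {ω : ℕ → S | ∀ i ≤ n, ω i = x i} = ⋂ i ∈ Set.Iic n, (fun ω : ℕ → S => ω i) ⁻¹' {x i} := by
      ext ω; simp
    rw [this]
    exact MeasurableSet.biInter (Set.to_countable _) fun i _ =>
      measurable_pi_apply i (measurableSet_singleton _)
  refine ext_of_generate_finite C ?_ ?_ ?_ (by simp)
  · apply le_antisymm
    · refine iSup_le fun k => ?_
      rw [MeasurableSpace.comap_le_iff_le_map]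
      intro A _
      change MeasurableSet[MeasurableSpace.generateFrom C] ((fun ω : ℕ → S => ω k) ⁻¹' A)
      have : ((fun ω : ℕ → S => ω k) ⁻¹' A) =
          ⋃ y : {y : Fin (k + 1) → S // y (Fin.last k) ∈ A},
            {ω | ∀ i ≤ k, ω i = (fun i => if hi : i < k + 1 then y.1 ⟨i, hi⟩ else y.1 0) i} := by
        ext ω
        simp only [Set.mem_preimage, Set.mem_iUnion]
        constructor
        · intro hA
          refine ⟨⟨fun i => ω i, by simpa using hA⟩, ?_⟩
          intro i hi
          simp [Nat.lt_succ_of_le hi]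
        · rintro ⟨y, hy⟩
          have := hy k le_rfl
          simp only [lt_add_iff_pos_right, zero_lt_one, dite_true] at this
          rw [this]
          exact y.2
      rw [this]
      refine MeasurableSet.iUnion fun y => MeasurableSpace.measurableSet_generateFrom ⟨k, _, rfl⟩
    · refine MeasurableSpace.generateFrom_le ?_
      rintro _ ⟨n, x, rfl⟩
      exact hmeas n x
  · rintro _ ⟨n, x, rfl⟩ _ ⟨m, y, rfl⟩ ⟨ω, h1, h2⟩
    refine ⟨max n m, ω, ?_⟩
    ext η
    constructor
    · rintro ⟨g1, g2⟩ i hi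
      rcases le_max_iff.1 hi with hi | hi
      · rw [g1 i hi, h1 i hi]
      · rw [g2 i hi, h2 i hi]
    · intro g
      exact ⟨fun i hi => by rw [g i (le_max_of_le_left hi), h1 i hi],
        fun i hi => by rw [g i (le_max_of_le_right hi), h2 i hi]⟩
  · rintro _ ⟨n, x, rfl⟩
    exact h n x

/-- Sublinear errors stay sublinear after a time change `N n ≤ n`. -/
lemma tendsto_timechange (r : ℕ → ℝ) (hr : Tendsto (fun m : ℕ => r m / m) atTop (𝓝 0))
    (N : ℕ → ℕ) (hN : ∀ n, N n ≤ n) : Tendsto (fun n : ℕ => r (N n) / n) atTop (𝓝 0) := by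
  rw [Metric.tendsto_atTop]
  intro ε hε
  obtain ⟨K, hK⟩ := (Metric.tendsto_atTop.1 hr) (ε / 2) (by positivity)
  set B := ∑ m ∈ Finset.range (K + 1), |r m| with hB
  have hB0 : 0 ≤ B := Finset.sum_nonneg fun _ _ => abs_nonneg _
  have hbd : ∀ m, |r m| ≤ ε / 2 * m + B := by
    intro m
    rcases Nat.lt_or_ge m (K + 1) with h | h
    · have : |r m| ≤ B := Finset.single_le_sum (f := fun m => |r m|) (fun _ _ => abs_nonneg _)
        (Finset.mem_range.2 h)
      have : 0 ≤ ε / 2 * (m : ℝ) := by positivity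
      linarith
    · have h1 := hK m (by omega)
      have hm : (0 : ℝ) < m := by exact_mod_cast (by omega : 0 < m)
      rw [Real.dist_eq, sub_zero, abs_div, abs_of_pos hm, div_lt_iff₀ hm] at h1
      linarith
  obtain ⟨L, hL⟩ := exists_nat_gt (B / (ε / 2))
  refine ⟨L + 1, fun n hn => ?_⟩
  have hn0 : (0 : ℝ) < n := by exact_mod_cast (by omega : 0 < n)
  rw [Real.dist_eq, sub_zero, abs_div, abs_of_pos hn0, div_lt_iff₀ hn0]
  have h1 := hbd (N n)
  have h2 : (N n : ℝ) ≤ n := by exact_mod_cast hN n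
  have h3 : (L : ℝ) ≤ n := by exact_mod_cast (by omega : L ≤ n)
  have h4 : B < ε / 2 * n := by
    rw [div_lt_iff₀ (by positivity)] at hL
    nlinarith
  nlinarith

lemma stat_pow {T : Type*} [Fintype T] [DecidableEq T] (P : Matrix T T ℝ) (w : T → ℝ)
    (hw : ∀ b, ∑ a, w a * P a b = w b) (n : ℕ) (b : T) : ∑ a, w a * (P ^ n) a b = w b := by
  have h : Matrix.vecMul w P = w := by
    ext b; simpa [Matrix.vecMul, dotProduct] using hw b
  have h2 : ∀ n : ℕ, Matrix.vecMul w (P ^ n) = w := by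
    intro n
    induction n with
    | zero => simp
    | succ n ih => rw [pow_succ, ← Matrix.vecMul_vecMul, ih, h]
  simpa [Matrix.vecMul, dotProduct] using congrFun (h2 n) b

/-- A nonnegative invariant vector vanishing somewhere is zero. -/
lemma stat_zero {T : Type*} [Fintype T] [DecidableEq T] (P : Matrix T T ℝ)
    (hP : ∀ a b, 0 ≤ P a b) (hirr : MatIrreducible P) (w : T → ℝ) (hw0 : ∀ a, 0 ≤ w a)
    (hw : ∀ b, ∑ a, w a * P a b = w b) (b : T) (hb : w b = 0) (a : T) : w a = 0 := by
  obtain ⟨n, -, hn⟩ := hirr a b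
  have hpow : ∀ (n : ℕ) a b, 0 ≤ (P ^ n) a b := by
    intro n
    induction n with
    | zero =>
      intro a b
      rw [pow_zero, Matrix.one_apply]
      split_ifs <;> norm_num
    | succ n ih =>
      intro a b
      rw [pow_succ, Matrix.mul_apply]
      exact Finset.sum_nonneg fun c _ => mul_nonneg (ih _ _) (hP _ _)
  have h1 := stat_pow P w hw n b
  rw [hb] at h1
  have h2 := (Finset.sum_eq_zero_iff_of_nonneg
    (fun c _ => mul_nonneg (hw0 c) (hpow n c b))).1 h1 a (Finset.mem_univ _)
  rcases mul_eq_zero.1 h2 with h | h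
  · exact h
  · exact absurd h hn.ne'

lemma stat_unique {T : Type*} [Fintype T] [DecidableEq T] (P : Matrix T T ℝ)
    (hP : ∀ a b, 0 ≤ P a b) (hirr : MatIrreducible P) (y π : T → ℝ)
    (hy : IsStationaryDist P y) (hπ : IsStationaryDist P π) : y = π := by
  obtain ⟨hy0, hy1, hyP⟩ := hy
  obtain ⟨hπ0, hπ1, hπP⟩ := hπ
  have hpos : ∀ a, 0 < π a := by
    intro a
    refine lt_of_le_of_ne (hπ0 a) fun h => ?_
    have h2 := stat_zero P hP hirr π hπ0 hπP a h.symm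
    simp [h2] at hπ1
  have hne : Nonempty T := by
    by_contra h
    rw [not_nonempty_iff] at h
    simp at hπ1
  obtain ⟨b, hb⟩ := Finite.exists_min (fun a => y a / π a)
  set k := y b / π b with hk
  have hw := stat_zero P hP hirr (fun a => y a - k * π a)
    (fun a => by
      have := hb a
      rw [le_div_iff₀ (hpos a)] at this
      linarith)
    (fun c => by
      simp_rw [sub_mul, Finset.sum_sub_distrib, mul_assoc]
      rw [← Finset.mul_sum, hyP, hπP])
    b (by
      have := (hpos b).ne'
      simp only [hk]; field_simp; simp)
  have hyk : ∀ a, y a = k * π a := fun a => by linarith [hw a]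
  have : k = 1 := by
    simp_rw [hyk] at hy1
    rw [← Finset.mul_sum, hπ1] at hy1
    linarith
  ext a
  rw [hyk, this, one_mul]

lemma freq_tendsto {T : Type*} [Fintype T] [DecidableEq T] (P : Matrix T T ℝ)
    (hP : ∀ a b, 0 ≤ P a b) (hirr : MatIrreducible P) (π : T → ℝ)
    (hπ : IsStationaryDist P π) (f : ℕ → T → ℝ) (hf : ∀ᶠ n in atTop, f n ∈ stdSimplex ℝ T)
    (hfP : ∀ b, Tendsto (fun n => ∑ a, f n a * P a b - f n b) atTop (𝓝 0)) :
    Tendsto f atTop (𝓝 π) := by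
  refine (isCompact_stdSimplex ℝ T).tendsto_nhds_of_unique_mapClusterPt hf fun y hy hcl => ?_
  refine stat_unique P hP hirr y π ⟨hy.1, hy.2, fun b => ?_⟩ hπ
  have hc : Continuous (fun g : T → ℝ => ∑ a, g a * P a b - g b) := by fun_prop
  have h1 := hcl.continuousAt_comp hc.continuousAt
  have h2 : ∑ a, y a * P a b - y b = 0 := by
    by_contra hne
    have := h1.clusterPt.mono (hfP b)
    exact hne (eq_of_nhds_neBot this)
  linarith


/-- The discrete measure with weights `w`. -/
def massMeasure {S : Type*} [MeasurableSpace S] (w : S → ℝ) : Measure S :=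
  Measure.sum (fun y => ENNReal.ofReal (w y) • Measure.dirac y)

lemma massMeasure_singleton {S : Type*} [MeasurableSpace S]
    [MeasurableSingletonClass S] (w : S → ℝ) (y : S) :
    massMeasure w {y} = ENNReal.ofReal (w y) := by
  classical
  rw [massMeasure, Measure.sum_apply _ (measurableSet_singleton y), tsum_eq_single y]
  · simp
  · intro z hz
    simp [hz]

lemma massMeasure_prob {S : Type*} [MeasurableSpace S] (w : S → ℝ) (h0 : ∀ y, 0 ≤ w y)
    (h1 : HasSum w 1) : IsProbabilityMeasure (massMeasure w) := by
  constructor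
  rw [massMeasure, Measure.sum_apply _ MeasurableSet.univ]
  simp only [Measure.smul_apply, measure_univ, smul_eq_mul, mul_one]
  rw [← ENNReal.ofReal_tsum_of_nonneg h0 h1.summable, h1.tsum_eq, ENNReal.ofReal_one]

lemma massMeasure_integrable {S : Type*} [MeasurableSpace S] [Countable S]
    [MeasurableSingletonClass S] (w : S → ℝ) (h0 : ∀ y, 0 ≤ w y) (F : S → ℝ)
    (hF : Summable (fun y => w y * |F y|)) : Integrable F (massMeasure w) := by
  refine integrable_sum_dirac (fun _ => ENNReal.ofReal_ne_top) ?_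
  simpa [ENNReal.toReal_ofReal (h0 _)] using hF

lemma massMeasure_integral {S : Type*} [MeasurableSpace S] [Countable S]
    [MeasurableSingletonClass S] (w : S → ℝ) (h0 : ∀ y, 0 ≤ w y) (F : S → ℝ)
    (hF : Summable (fun y => w y * |F y|)) :
    ∫ y, F y ∂(massMeasure w) = ∑' y, w y * F y := by
  have h := hasSum_integral_measure (massMeasure_integrable w h0 F hF)
  rw [massMeasure, ← h.tsum_eq]
  simp [ENNReal.toReal_ofReal (h0 _)]

lemma stack_slln {S T : Type*} [MeasurableSpace S] [Countable S]
    [MeasurableSingletonClass S] (w : T → S → ℝ) (h0 : ∀ t y, 0 ≤ w t y)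
    [∀ k : T × ℕ, IsProbabilityMeasure (massMeasure (w k.1))]
    (t : T) (F : S → ℝ) (hF : Summable (fun y => w t y * |F y|)) :
    ∀ᵐ U ∂(Measure.infinitePi (fun k : T × ℕ => massMeasure (w k.1))),
      Tendsto (fun n : ℕ => (∑ j ∈ Finset.range n, F (U (t, j))) / n) atTop
        (𝓝 (∑' y, w t y * F y)) := by
  set Q := Measure.infinitePi (fun k : T × ℕ => massMeasure (w k.1)) with hQ
  have hFm : Measurable F := measurable_of_countable F
  have hmp : ∀ k : T × ℕ, MeasurePreserving (fun U : T × ℕ → S => U k) Q (massMeasure (w k.1)) :=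
    fun k => measurePreserving_eval_infinitePi (fun k : T × ℕ => massMeasure (w k.1)) k
  have hind : iIndepFun (fun (k : T × ℕ) (U : T × ℕ → S) => F (U k)) Q :=
    iIndepFun_infinitePi (P := fun k : T × ℕ => massMeasure (w k.1)) (X := fun _ => F)
      (fun _ => hFm)
  have hFi := massMeasure_integrable (w t) (h0 t) F hF
  have h := strong_law_ae_real (μ := Q) (fun j U => F (U (t, j)))
    ((hmp (t, 0)).integrable_comp_of_integrable hFi)
    (fun i j hij => hind.indepFun (by simpa using hij))
    (fun i => by
      refine ⟨(hFm.comp (measurable_pi_apply _)).aemeasurable,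
        (hFm.comp (measurable_pi_apply _)).aemeasurable, ?_⟩
      have e : ∀ j, Q.map (fun U : T × ℕ → S => F (U (t, j))) = (massMeasure (w t)).map F := by
        intro j
        rw [← (hmp (t, j)).map_eq, Measure.map_map hFm (measurable_pi_apply _)]
        rfl
      rw [e, e])
  have hI : Q[fun U => F (U (t, 0))] = ∑' y, w t y * F y := by
    rw [← massMeasure_integral (w t) (h0 t) F hF, ← (hmp (t, 0)).map_eq,
      integral_map (measurable_pi_apply _).aemeasurable hFm.aestronglyMeasurable]
  rw [hI] at h
  exact h

lemma stack_law {S T : Type*} [AddCommGroup S] [MeasurableSpace S] [Countable S]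
    [MeasurableSingletonClass S] [DecidableEq T] (c : S → T)
    (w : T → S → ℝ) (h0 : ∀ t y, 0 ≤ w t y)
    [∀ k : T × ℕ, IsProbabilityMeasure (massMeasure (w k.1))]
    (n : ℕ) (x : ℕ → S) (hx : x 0 = 0) :
    Measure.infinitePi (fun k : T × ℕ => massMeasure (w k.1))
        {U | ∀ i ≤ n, (stackWalk c U i).1 = x i} =
      ENNReal.ofReal (∏ i ∈ Finset.range n, w (c (x i)) (x (i + 1) - x i)) := by
  set Q := Measure.infinitePi (fun k : T × ℕ => massMeasure (w k.1)) with hQ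
  have hmp : ∀ k : T × ℕ, MeasurePreserving (fun U : T × ℕ → S => U k) Q (massMeasure (w k.1)) :=
    fun k => measurePreserving_eval_infinitePi (fun k : T × ℕ => massMeasure (w k.1)) k
  have hind0 : iIndepFun (fun (k : T × ℕ) (U : T × ℕ → S) => U k) Q :=
    iIndepFun_infinitePi (P := fun k : T × ℕ => massMeasure (w k.1)) (X := fun _ => id)
      (fun _ => measurable_id)
  have hind := hind0.precomp (visits_inj c x)
  have h := hind.measure_inter_preimage_eq_mul (Finset.range n)
    (sets := fun i => {x (i + 1) - x i}) (fun i _ => measurableSet_singleton _)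
  have e : {U : T × ℕ → S | ∀ i ≤ n, (stackWalk c U i).1 = x i} =
      ⋂ i ∈ Finset.range n, (fun U : T × ℕ → S => U (c (x i), visits c x (c (x i)) i)) ⁻¹'
        {x (i + 1) - x i} := by
    ext U
    simp only [Set.mem_ofPred_eq, stackWalk_cyl c U x hx n, Set.mem_iInter, Finset.mem_range,
      Set.mem_preimage, Set.mem_singleton_iff]
  rw [e]
  refine h.trans ?_
  rw [ENNReal.ofReal_prod_of_nonneg (fun i _ => h0 _ _)]
  refine Finset.prod_congr rfl fun i _ => ?_
  rw [(hmp _).measure_preimage (measurableSet_singleton _).nullMeasurableSet,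
    massMeasure_singleton]

lemma env_rep {d : ℕ} (Md : Fin d → ℕ) [∀ i, NeZero (Md i)]
    (p : (Fin d → ℤ) → (Fin d → ℤ) → ℝ) (henv : IsPeriodicEnv Md p) (x y : Fin d → ℤ) :
    p (repT Md (projT Md x)) y = p x y := by
  have hper := henv.2.2
  have h1 : ∀ (k : ℕ) (x : Fin d → ℤ) (i : Fin d),
      p (x + Pi.single i ((k : ℤ) * (Md i : ℤ))) y = p x y := by
    intro k
    induction k with
    | zero => intro x i; simp
    | succ k ih =>
      intro x i
      have : x + Pi.single i (((k + 1 : ℕ) : ℤ) * (Md i : ℤ)) =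
          (x + Pi.single i ((k : ℤ) * (Md i : ℤ))) + Pi.single i (Md i : ℤ) := by
        rw [add_assoc, ← Pi.single_add]
        congr 2
        push_cast; ring
      rw [this, hper, ih]
  have h2 : ∀ (k : ℤ) (x : Fin d → ℤ) (i : Fin d),
      p (x + Pi.single i (k * (Md i : ℤ))) y = p x y := by
    intro k x i
    obtain ⟨m, rfl | rfl⟩ := k.eq_nat_or_neg
    · exact h1 m x i
    · rw [← h1 m (x + _) i, add_assoc, ← Pi.single_add]
      simp
  have h3 : ∀ (s : Finset (Fin d)) (k : Fin d → ℤ) (x : Fin d → ℤ),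
      p (x + ∑ i ∈ s, Pi.single i (k i * (Md i : ℤ))) y = p x y := by
    intro s k
    induction s using Finset.induction_on with
    | empty => intro x; simp
    | insert a s ha ih =>
      intro x
      rw [Finset.sum_insert ha, ← add_assoc, ih, h2]
  rw [← h3 Finset.univ (fun i => x i / (Md i : ℤ)) (repT Md (projT Md x))]
  congr 1
  rw [Finset.univ_sum_single (fun i => x i / (Md i : ℤ) * (Md i : ℤ))]
  ext i
  simp only [Pi.add_apply, repT, projT, ZMod.val_intCast]
  exact Int.emod_add_ediv_mul _ _

lemma projT_add {d : ℕ} (Md : Fin d → ℕ) (x y : Fin d → ℤ) :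
    projT Md (x + y) = projT Md x + projT Md y := by
  ext i; simp [projT]

/-- The deterministic core: if all stacks obey the law of large numbers, so does the walk. -/
lemma stack_core {S T : Type*} [AddCommGroup S] [Fintype T] [DecidableEq T] (c : S → T)
    (g : T → S → T) (hg : ∀ x u, c (x + u) = g (c x) u)
    (P : Matrix T T ℝ) (hP : ∀ a b, 0 ≤ P a b) (hirr : MatIrreducible P) (π : T → ℝ)
    (hπ : IsStationaryDist P π) (U : T × ℕ → S)
    (hU : ∀ t b, Tendsto (fun n : ℕ =>
      (∑ j ∈ Finset.range n, (if g t (U (t, j)) = b then (1 : ℝ) else 0)) / n) atTop (𝓝 (P t b)))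
    (φ : S →+ ℝ) (m : T → ℝ)
    (hφ : ∀ t, Tendsto (fun n : ℕ => (∑ j ∈ Finset.range n, φ (U (t, j))) / n) atTop (𝓝 (m t))) :
    Tendsto (fun n : ℕ => φ (stackWalk c U n).1 / n) atTop (𝓝 (∑ t, π t * m t)) := by
  set N : T → ℕ → ℕ := fun t n => (stackWalk c U n).2 t with hNdef
  have hNv : ∀ t n, N t n = visits c (fun k => (stackWalk c U k).1) t n :=
    fun t n => stackWalk_visits c U n t
  have hN : ∀ t n, N t n ≤ n := fun t n => by rw [hNv]; exact visits_le _ _ _ _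
  have hNsum : ∀ n, ∑ t, N t n = n := fun n => by simp_rw [hNv]; exact visits_sum _ _ _
  -- time change
  have htc : ∀ (A : ℕ → ℝ) (α : ℝ) (t : T), Tendsto (fun n : ℕ => A n / n) atTop (𝓝 α) →
      Tendsto (fun n : ℕ => A (N t n) / n - (N t n : ℝ) / n * α) atTop (𝓝 0) := by
    intro A α t hA
    have h1 : Tendsto (fun n : ℕ => (A n - n * α) / n) atTop (𝓝 0) := by
      have h2 : Tendsto (fun n : ℕ => A n / n - α) atTop (𝓝 0) := by
        simpa using hA.sub_const α
      refine h2.congr' ?_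
      filter_upwards [eventually_gt_atTop 0] with n hn
      have : (n : ℝ) ≠ 0 := by positivity
      field_simp
    have h3 := tendsto_timechange _ h1 (N t) (hN t)
    refine h3.congr fun n => ?_
    ring
  set f : ℕ → T → ℝ := fun n t => (N t n : ℝ) / n with hf
  have hfreq : Tendsto f atTop (𝓝 π) := by
    refine freq_tendsto P hP hirr π hπ f ?_ ?_
    · filter_upwards [eventually_gt_atTop 0] with n hn
      refine ⟨fun t => by positivity, ?_⟩
      simp only [hf]
      rw [← Finset.sum_div, ← Nat.cast_sum, hNsum]
      exact div_self (by positivity)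
    · intro b
      have h1 : Tendsto (fun n : ℕ => ∑ t, ((∑ j ∈ Finset.range (N t n),
          (if g t (U (t, j)) = b then (1 : ℝ) else 0)) / n - (N t n : ℝ) / n * P t b))
          atTop (𝓝 0) := by
        have := tendsto_finsetSum (Finset.univ : Finset T) (fun t _ => htc _ _ t (hU t b))
        simpa using this
      have h2 : ∀ n : ℕ, ∑ t, ∑ j ∈ Finset.range (N t n),
          (if g t (U (t, j)) = b then (1 : ℝ) else 0) =
          (N b n : ℝ) + (if c (stackWalk c U n).1 = b then (1 : ℝ) else 0)
            - (if c (0 : S) = b then (1 : ℝ) else 0) := by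
        intro n
        rw [← stackWalk_sum c U (fun t u => if g t u = b then (1 : ℝ) else 0) n]
        simp_rw [← hg, add_sub_cancel]
        rw [hNv, visits]
        push_cast
        rw [← Finset.sum_range_succ
          (fun j => if c (stackWalk c U j).1 = b then (1 : ℝ) else 0) n, Finset.sum_range_succ']
        refine Eq.trans ?_ (add_sub_cancel_right _ _).symm
        exact Finset.sum_congr rfl fun j _ => by congr
      have h3 : Tendsto (fun n : ℕ => ((if c (stackWalk c U n).1 = b then (1 : ℝ) else 0)
            - (if c (0 : S) = b then (1 : ℝ) else 0)) / n) atTop (𝓝 0) := by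
        have hz : Tendsto (fun n : ℕ => (1 : ℝ) / n) atTop (𝓝 0) :=
          tendsto_one_div_atTop_nhds_zero_nat
        refine squeeze_zero_norm (fun n => ?_) hz
        rw [norm_div, Real.norm_eq_abs, Real.norm_natCast]
        gcongr
        split_ifs <;> norm_num
      have h4 := h3.sub h1
      rw [sub_zero] at h4
      refine h4.congr fun n => ?_
      rw [Finset.sum_sub_distrib, ← Finset.sum_div, h2]
      simp only [hf]
      ring
  have hX : ∀ n : ℕ, φ (stackWalk c U n).1 = ∑ t, ∑ j ∈ Finset.range (N t n), φ (U (t, j)) := by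
    intro n
    rw [← stackWalk_sum c U (fun _ u => φ u) n]
    simp_rw [map_sub]
    rw [Finset.sum_range_sub (fun k => φ (stackWalk c U k).1)]
    simp [stackWalk]
  have h1 : Tendsto (fun n : ℕ => ∑ t, ((∑ j ∈ Finset.range (N t n), φ (U (t, j))) / n
      - (N t n : ℝ) / n * m t)) atTop (𝓝 0) := by
    have := tendsto_finsetSum (Finset.univ : Finset T) (fun t _ => htc _ _ t (hφ t))
    simpa using this
  have h2 : Tendsto (fun n : ℕ => ∑ t, f n t * m t) atTop (𝓝 (∑ t, π t * m t)) :=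
    tendsto_finsetSum _ fun t _ => ((tendsto_pi_nhds.1 hfreq) t).mul_const _
  have h3 := h1.add h2
  rw [zero_add] at h3
  refine h3.congr fun n => ?_
  rw [hX, Finset.sum_sub_distrib, ← Finset.sum_div]
  simp [hf]

end Helpers

/-- **Law of large numbers for RWPE.** If the induced chain on the torus is irreducible
and aperiodic with stationary distribution `π`, and the jump distributions have finite
first moments, then `Xₙ / n → ν := ∑_{x∈T} π(x) ∑_{y∈ℤ^d} p_x(y) y` almost surely. -/
theorem rwpe_lln (d : ℕ) (hd : 0 < d) (Md : Fin d → ℕ) [∀ i, NeZero (Md i)]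
    (p : (Fin d → ℤ) → (Fin d → ℤ) → ℝ) (henv : IsPeriodicEnv Md p)
    (hirr : MatIrreducible (indMatrix Md p)) (haper : MatAperiodic (indMatrix Md p))
    (π : Torus d Md → ℝ) (hπ : IsStationaryDist (indMatrix Md p) π)
    (hmom : ∀ t : Torus d Md,
      Summable (fun y : Fin d → ℤ => p (repT Md t) y * ∑ i, |(y i : ℝ)|))
    (μ : Measure (ℕ → (Fin d → ℤ))) (hμ : IsRWPELaw p 0 μ) :
    ∀ᵐ ω ∂μ, Tendsto (fun n : ℕ => fun i : Fin d => (ω n i : ℝ) / n) atTop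
      (𝓝 (driftVec Md p π)) := by
    classical
  obtain ⟨hμp, hμc⟩ := hμ
  set w : Torus d Md → (Fin d → ℤ) → ℝ := fun t => p (repT Md t) with hw
  have h0 : ∀ t y, 0 ≤ w t y := fun t y => henv.1 _ _
  have hsum : ∀ t, HasSum (w t) 1 := fun t => henv.2.1 _
  haveI : ∀ k : Torus d Md × ℕ, IsProbabilityMeasure (massMeasure (w k.1)) :=
    fun k => massMeasure_prob _ (h0 _) (hsum _)
  set Q := Measure.infinitePi (fun k : Torus d Md × ℕ => massMeasure (w k.1)) with hQ
  let W : (Torus d Md × ℕ → (Fin d → ℤ)) → ℕ → (Fin d → ℤ) :=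
    fun U n => (stackWalk (projT Md) U n).1
  have hW : Measurable W := measurable_pi_lambda _ fun n =>
    measurable_fst.comp (stackWalk_measurable (projT Md) n)
  haveI : IsProbabilityMeasure (Q.map W) := Measure.isProbabilityMeasure_map hW.aemeasurable
  have hlaw : μ = Q.map W := by
    refine traj_measure_ext μ (Q.map W) fun n x => ?_
    have hmeas : MeasurableSet {ω : ℕ → (Fin d → ℤ) | ∀ i ≤ n, ω i = x i} := by
      have : {ω : ℕ → (Fin d → ℤ) | ∀ i ≤ n, ω i = x i} =
          ⋂ i ∈ Set.Iic n, (fun ω : ℕ → (Fin d → ℤ) => ω i) ⁻¹' {x i} := by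
        ext ω; simp
      rw [this]
      exact MeasurableSet.biInter (Set.to_countable _) fun i _ =>
        measurable_pi_apply i (measurableSet_singleton _)
    rw [hμc, Measure.map_apply hW hmeas]
    by_cases hx : x 0 = 0
    · rw [if_pos hx, one_mul]
      refine Eq.trans ?_ (stack_law (projT Md) w h0 n x hx).symm
      simp_rw [hw, env_rep Md p henv]
    · rw [if_neg hx, zero_mul, ENNReal.ofReal_zero]
      have : W ⁻¹' {ω | ∀ i ≤ n, ω i = x i} = ∅ := by
        ext U
        simp only [Set.mem_preimage, Set.mem_ofPred_eq, Set.mem_empty_iff_false, iff_false]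
        intro h
        exact hx ((h 0 (Nat.zero_le _)).symm.trans rfl)
      rw [this, measure_empty]
  have hPnn : ∀ a b, 0 ≤ indMatrix Md p a b := by
    intro a b
    simp only [indMatrix, Matrix.of_apply]
    refine tsum_nonneg fun z => ?_
    split_ifs
    · exact henv.1 _ _
    · exact le_rfl
  have hae1 : ∀ᵐ U ∂Q, ∀ t b : Torus d Md, Tendsto (fun n : ℕ =>
      (∑ j ∈ Finset.range n, (if t + projT Md (U (t, j)) = b then (1 : ℝ) else 0)) / n) atTop
        (𝓝 (indMatrix Md p t b)) := by
    rw [ae_all_iff]; intro t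
    rw [ae_all_iff]; intro b
    have hs : Summable (fun y => w t y * |if t + projT Md y = b then (1 : ℝ) else 0|) := by
      refine Summable.of_nonneg_of_le (fun y => mul_nonneg (h0 _ _) (abs_nonneg _)) (fun y => ?_)
        (hsum t).summable
      split_ifs
      · simp
      · simpa using h0 t y
    have h := stack_slln w h0 t (fun y => if t + projT Md y = b then (1 : ℝ) else 0) hs
    have e : ∑' y, w t y * (if t + projT Md y = b then (1 : ℝ) else 0) = indMatrix Md p t b := by
      simp only [indMatrix, Matrix.of_apply, mul_ite, mul_one, mul_zero, hw]
    rw [e] at h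
    exact h
  have hae2 : ∀ᵐ U ∂Q, ∀ (i : Fin d) (t : Torus d Md), Tendsto (fun n : ℕ =>
      (∑ j ∈ Finset.range n, ((U (t, j) i : ℤ) : ℝ)) / n) atTop
        (𝓝 (∑' y : Fin d → ℤ, p (repT Md t) y * (y i : ℝ))) := by
    rw [ae_all_iff]; intro i
    rw [ae_all_iff]; intro t
    refine stack_slln w h0 t (fun y => (y i : ℝ)) ?_
    refine Summable.of_nonneg_of_le (fun y => mul_nonneg (h0 _ _) (abs_nonneg _)) (fun y => ?_)
      (hmom t)
    exact mul_le_mul_of_nonneg_left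
      (Finset.single_le_sum (f := fun i => |(y i : ℝ)|) (fun _ _ => abs_nonneg _)
        (Finset.mem_univ i)) (h0 _ _)
  rw [hlaw]
  have hev : MeasurableSet {ω : ℕ → (Fin d → ℤ) |
      Tendsto (fun n : ℕ => fun i : Fin d => (ω n i : ℝ) / n) atTop (𝓝 (driftVec Md p π))} := by
    refine measurableSet_tendsto _ fun n => measurable_pi_lambda _ fun i => ?_
    exact (measurable_of_countable (fun y : Fin d → ℤ => (y i : ℝ) / n)).comp
      (measurable_pi_apply n)
  rw [ae_map_iff hW.aemeasurable hev]
  filter_upwards [hae1, hae2] with U hU1 hU2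
  rw [tendsto_pi_nhds]
  intro i
  let φ : (Fin d → ℤ) →+ ℝ := (Int.castAddHom ℝ).comp (Pi.evalAddMonoidHom (fun _ => ℤ) i)
  exact stack_core (projT Md) (fun t u => t + projT Md u) (projT_add Md) (indMatrix Md p) hPnn
    hirr π hπ U hU1 φ _ (hU2 i)
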